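/- arXiv:2102.07080 — 2 statements merged into one kernel-verified Lean document; each statement's English description precedes it below -/
import Mathlib

section
/- Let 𝔞 be a cofinite monomial ideal in k[x₁,…,x_d] and let ℓ be any positive integer. Let φ ∈ ℚ⟦z⟧ be the formal power series whose j-th coefficient is m(j/ℓ) for j ≥ 1 and whose constant coefficient is 0. Then (1 − z^ℓ)^d · φ(z) is a polynomial; in particular φ is a rational function of z. (Monomial case of Theorem 6.1: taking ℓ to be a common denominator of all jumping numbers of 𝔞, the Poincaré series φ_Z(T) = Σ_c m(c) T^c of 𝔞 is a rational function of z = T^{1/ℓ}.) -/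
open Set Filter Pointwise MeasureTheory

/-- The map sending a vector of natural number exponents to the corresponding
real vector. -/
noncomputable def expToReal (d : ℕ) (v : Fin d → ℕ) : Fin d → ℝ := fun i => (v i : ℝ)

/-- The Newton polyhedron of a monomial ideal with exponent set `S`:
the convex hull in `ℝ^d` of the exponent vectors. -/
noncomputable def newtonPoly (d : ℕ) (S : Set (Fin d → ℕ)) : Set (Fin d → ℝ) :=
  convexHull ℝ (expToReal d '' S)

/-- The multiplicity `m(c)` of `c > 0` as a (candidate) jumping number of the monomial
ideal with exponent set `S`: the number of `v ∈ ℕ^d` with `v + 𝟏` on the boundary part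
`c•P(𝔞) \ int(c•P(𝔞))` of the dilated Newton polyhedron. -/
noncomputable def multJump (d : ℕ) (S : Set (Fin d → ℕ)) (c : ℝ) : ℕ :=
  Nat.card {v : Fin d → ℕ |
    expToReal d v + 1 ∈ c • newtonPoly d S \ interior (c • newtonPoly d S)}

/-!
Let `A` be the linear map sending coefficients `t` to `∑ i, t i • a i`, where the `a i` are finitely
many exponent vectors whose upper closure is `S` and which include a multiple of every axis vector.
Then `c • P(𝔞)` is the image under `A` of `{t ≥ 0 | ∑ i, t i ≥ c}`, and `y = v + 𝟏` lies on the
boundary part of `c • P(𝔞)` iff `c` is the largest coordinate sum of a `t ≥ 0` with `A t = y`.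
Breaking ties lexicographically makes the optimal `t` unique, so `m(c)` counts optimal `t` with
coordinate sum `c`.

If `t` is optimal, so is every `s ≥ 0` supported inside the support `T` of `t`: a better competitor
of `s` would, scaled down, improve `t`. Hence the `a i`, `i ∈ T`, are linearly independent, which
gives `|T| ≤ d`, and the optimal `t` with support `T` are stable under unit steps along `T`.
Multiplying their generating series by `1 - z ^ ℓ` for each `i ∈ T` therefore leaves only those with
coordinates at most `1`, and these contribute a polynomial.
-/

/-- Nonnegativity of a vector in the lexicographic preorder given by a list of functionals. -/
def LexNonneg {𝕜 E : Type*} [Field 𝕜] [LinearOrder 𝕜] [AddCommGroup E] [Module 𝕜 E] :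
    List (E →ₗ[𝕜] 𝕜) → E → Prop
  | [], _ => True
  | f :: fs, x => 0 < f x ∨ (f x = 0 ∧ LexNonneg fs x)

namespace LexNonneg

variable {𝕜 E : Type*} [Field 𝕜] [LinearOrder 𝕜] [AddCommGroup E] [Module 𝕜 E]
  {f : E →ₗ[𝕜] 𝕜} {fs : List (E →ₗ[𝕜] 𝕜)} {x : E}

theorem head_nonneg (h : LexNonneg (f :: fs) x) : 0 ≤ f x :=
  h.elim le_of_lt fun h => h.1.ge

theorem tail (h : LexNonneg (f :: fs) x) (hf : f x = 0) : LexNonneg fs x :=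
  h.elim (fun h => absurd hf h.ne') And.right

variable [IsStrictOrderedRing 𝕜]

theorem of_smul {ε : 𝕜} (hε : 0 < ε) (h : LexNonneg fs (ε • x)) : LexNonneg fs x := by
  induction fs with
  | nil => trivial
  | cons f fs ih =>
    simp only [LexNonneg, map_smul, smul_eq_mul, mul_pos_iff_of_pos_left hε, mul_eq_zero,
      hε.ne', false_or] at h
    exact h.imp_right (And.imp_right ih)

theorem apply_eq_zero (h : LexNonneg fs x) (hneg : LexNonneg fs (-x)) : ∀ f ∈ fs, f x = 0 := by
  induction fs with
  | nil => simp
  | cons f fs ih =>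
    have hf : f x = 0 :=
      le_antisymm (by simpa using hneg.head_nonneg) h.head_nonneg
    exact List.forall_mem_cons.2 ⟨hf, ih (h.tail hf) (hneg.tail (by simp [hf]))⟩

theorem exists_forall_sub_of_isCompact [TopologicalSpace 𝕜] [OrderClosedTopology 𝕜]
    [TopologicalSpace E] (hfs : ∀ f ∈ fs, Continuous f) {K : Set E} (hK : IsCompact K)
    (hne : K.Nonempty) : ∃ x ∈ K, ∀ y ∈ K, LexNonneg fs (y - x) := by
  induction fs generalizing K with
  | nil => exact ⟨hne.some, hne.some_mem, fun _ _ => trivial⟩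
  | cons f fs ih =>
    obtain ⟨hf, hfs⟩ := List.forall_mem_cons.1 hfs
    obtain ⟨x₀, hx₀, hmin⟩ := hK.exists_isMinOn hne hf.continuousOn
    obtain ⟨x, ⟨hxK, hx : f x = f x₀⟩, hlex⟩ := ih hfs
      (hK.inter_right (isClosed_singleton.preimage hf (t := {f x₀}))) ⟨x₀, hx₀, rfl⟩
    refine ⟨x, hxK, fun y hy => ?_⟩
    rcases (show f x₀ ≤ f y from hmin hy).lt_or_eq with hlt | heq
    · exact .inl (by rwa [map_sub, hx, sub_pos])
    · exact .inr ⟨by rw [map_sub, hx, heq, sub_self], hlex y ⟨hy, heq.symm⟩⟩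

end LexNonneg

theorem exists_pos_smul_le {ι 𝕜 : Type*} [Finite ι] [Field 𝕜] [LinearOrder 𝕜]
    [IsStrictOrderedRing 𝕜] {s t : ι → 𝕜} (ht : 0 ≤ t)
    (h : Function.support s ⊆ Function.support t) : ∃ ε : 𝕜, 0 < ε ∧ ε • s ≤ t := by
  have hbound : ∀ i, ∃ δ : 𝕜, 0 < δ ∧ ∀ ε, 0 < ε → ε < δ → ε * s i ≤ t i := fun i => by
    rcases le_or_gt (s i) 0 with hs | hs
    · exact ⟨1, one_pos, fun ε hε _ => (mul_nonpos_of_nonneg_of_nonpos hε.le hs).trans (ht i)⟩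
    · have hti : 0 < t i := (ht i).lt_of_ne' (h hs.ne')
      exact ⟨t i / s i, div_pos hti hs, fun ε _ hlt => ((lt_div_iff₀ hs).1 hlt).le⟩
  choose δ hδ hle using hbound
  obtain ⟨ε, hε, hεδ⟩ := Pi.exists_forall_pos_add_lt (x := 0) hδ
  exact ⟨ε, hε, fun i => hle i ε hε (by simpa using hεδ i)⟩

/-- The functionals defining the lexicographic order on coefficient vectors: first minus the
coordinate sum, then the coordinates in some fixed order. -/
noncomputable def negSumThenCoords (𝕜 ι : Type*) [Field 𝕜] [Fintype ι] :
    List ((ι → 𝕜) →ₗ[𝕜] 𝕜) :=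
  (-∑ i, LinearMap.proj i) :: Finset.univ.toList.map LinearMap.proj

theorem LexNonneg.eq_zero_of_neg {𝕜 ι : Type*} [Field 𝕜] [LinearOrder 𝕜]
    [IsStrictOrderedRing 𝕜] [Fintype ι] {x : ι → 𝕜} (h : LexNonneg (negSumThenCoords 𝕜 ι) x)
    (hneg : LexNonneg (negSumThenCoords 𝕜 ι) (-x)) : x = 0 :=
  funext fun i => h.apply_eq_zero hneg (LinearMap.proj i) (by simp [negSumThenCoords])

/-- `t` is the optimal nonnegative representation of `A t`: among all such representations it
has the largest coordinate sum and is lexicographically smallest for that sum. -/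
structure IsOptimalRep {𝕜 ι F : Type*} [Field 𝕜] [LinearOrder 𝕜] [Fintype ι] [AddCommGroup F]
    [Module 𝕜 F] (A : (ι → 𝕜) →ₗ[𝕜] F) (t : ι → 𝕜) : Prop where
  nonneg : 0 ≤ t
  lexNonneg_sub : ∀ s, 0 ≤ s → A s = A t → LexNonneg (negSumThenCoords 𝕜 ι) (s - t)

namespace IsOptimalRep

variable {𝕜 ι F : Type*} [Field 𝕜] [LinearOrder 𝕜] [IsStrictOrderedRing 𝕜] [Fintype ι]
  [AddCommGroup F] [Module 𝕜 F] {A : (ι → 𝕜) →ₗ[𝕜] F} {s t : ι → 𝕜}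

theorem sum_le (ht : IsOptimalRep A t) (hs : 0 ≤ s) (h : A s = A t) :
    ∑ i, s i ≤ ∑ i, t i := by
  simpa using (ht.lexNonneg_sub s hs h).head_nonneg

theorem injOn : InjOn A {t | IsOptimalRep A t} := fun s hs t ht h =>
  sub_eq_zero.1 <| (ht.lexNonneg_sub s hs.nonneg h).eq_zero_of_neg
    (by simpa using hs.lexNonneg_sub t ht.nonneg h.symm)

-- A competitor `r` of `s` yields the competitor `t + ε • (r - s)` of `t`.
theorem of_support_subset (ht : IsOptimalRep A t) (hs : 0 ≤ s)
    (h : Function.support s ⊆ Function.support t) : IsOptimalRep A s := by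
  refine ⟨hs, fun r hr hA => ?_⟩
  obtain ⟨ε, hε, hle⟩ := exists_pos_smul_le ht.nonneg h
  have hcomp : 0 ≤ t + ε • (r - s) := by
    rw [smul_sub, add_sub_left_comm]
    exact add_nonneg (smul_nonneg hε.le hr) (sub_nonneg.2 hle)
  exact .of_smul hε (by simpa using ht.lexNonneg_sub _ hcomp (by simp [hA]))

theorem eq_zero_of_map_eq_zero {c : ι → 𝕜} (ht : IsOptimalRep A t)
    (hc : Function.support c ⊆ Function.support t) (hA : A c = 0) : c = 0 := by
  have hlex : ∀ b : ι → 𝕜, Function.support b ⊆ Function.support t → A b = 0 →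
      LexNonneg (negSumThenCoords 𝕜 ι) b := fun b hb hAb => by
    obtain ⟨ε, hε, hle⟩ := exists_pos_smul_le (s := -b) ht.nonneg (by rwa [Function.support_neg])
    have hcomp : 0 ≤ t + ε • b := by
      simpa only [smul_neg, neg_le_iff_add_nonneg, add_comm] using hle
    exact .of_smul hε (by simpa using ht.lexNonneg_sub _ hcomp (by simp [hAb]))
  exact (hlex c hc hA).eq_zero_of_neg
    (hlex (-c) (by rwa [Function.support_neg]) (by simp [hA]))

theorem linearIndepOn_of_subset_support [DecidableEq ι] (ht : IsOptimalRep A t) {T : Finset ι}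
    (hT : (T : Set ι) ⊆ Function.support t) :
    LinearIndepOn 𝕜 (fun i => A (Pi.single i 1)) (T : Set ι) := by
  refine linearIndepOn_finset_iff.2 fun g hg i hi => ?_
  have hsupp : Function.support (∑ i ∈ T, g i • (Pi.single i 1 : ι → 𝕜)) ⊆ Function.support t := by
    refine fun k hk => hT ?_
    by_contra hkT
    refine hk ?_
    rw [Finset.sum_apply]
    exact Finset.sum_eq_zero fun i hi => by simp [show k ≠ i from fun h => hkT (h ▸ hi)]
  have hzero := ht.eq_zero_of_map_eq_zero hsupp (by simpa using hg)
  simpa [Finset.sum_apply, Pi.single_apply, hi] using congrFun hzero i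

theorem card_le_finrank_of_subset_support [Module.Finite 𝕜 F] (ht : IsOptimalRep A t) {T : Finset ι}
    (hT : (T : Set ι) ⊆ Function.support t) : T.card ≤ Module.finrank 𝕜 F := by
  classical
  simpa using LinearIndependent.fintype_card_le_finrank (ht.linearIndepOn_of_subset_support hT)

end IsOptimalRep

theorem exists_isOptimalRep {ι F : Type*} [Fintype ι] [AddCommGroup F] [Module ℝ F]
    {A : (ι → ℝ) →ₗ[ℝ] F} {t₀ : ι → ℝ} (h₀ : 0 ≤ t₀)
    (hmax : ∀ s, 0 ≤ s → A s = A t₀ → ∑ i, s i ≤ ∑ i, t₀ i) :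
    ∃ t, IsOptimalRep A t ∧ A t = A t₀ ∧ ∑ i, t i = ∑ i, t₀ i := by
  let K : Set (ι → ℝ) := {t | 0 ≤ t ∧ A t = A t₀ ∧ ∑ i, t i = ∑ i, t₀ i}
  have hfiber : IsClosed {t : ι → ℝ | A t = A t₀} := by
    have := (LinearMap.ker A).closed_of_finiteDimensional.preimage (continuous_sub_right t₀)
    simpa [Set.preimage, sub_eq_zero] using this
  have hclosed : IsClosed K := isClosed_Ici.inter (hfiber.inter
    (isClosed_eq (continuous_finsetSum _ fun i _ => continuous_apply i) continuous_const))
  have hbounded : K ⊆ Icc 0 fun _ => ∑ i, t₀ i := fun t ht =>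
    ⟨ht.1, fun i => ht.2.2 ▸ Finset.single_le_sum (fun i _ => ht.1 i) (Finset.mem_univ i)⟩
  obtain ⟨t, ⟨ht, hA, hsum⟩, hmin⟩ := LexNonneg.exists_forall_sub_of_isCompact
    (fs := negSumThenCoords ℝ ι) (fun f _ => f.continuous_of_finiteDimensional)
    (isCompact_Icc.of_isClosed_subset hclosed hbounded) ⟨t₀, h₀, rfl, rfl⟩
  refine ⟨t, ⟨ht, fun s hs hAs => ?_⟩, hA, hsum⟩
  rcases (hmax s hs (hAs.trans hA)).lt_or_eq with hlt | heq
  · exact .inl (by simpa [hsum] using hlt)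
  · exact hmin s ⟨hs, hAs.trans hA, heq⟩

/-- The power series whose `j`-th coefficient counts the points of `Y` of weight `j`. Points whose
weight is not a natural number are ignored, and `Set.ncard` makes an infinite level count `0`. -/
noncomputable def levelSeries (R : Type*) [Semiring R] {α : Type*} (w : α → ℝ) (Y : Set α) :
    PowerSeries R :=
  PowerSeries.mk fun j => ({y ∈ Y | w y = j}.ncard : R)

section LevelSeries

variable {R : Type*} {α : Type*} {w : α → ℝ} {Y Z : Set α}

theorem levelSeries_empty [Semiring R] : levelSeries R w ∅ = 0 := by
  ext j
  simp [levelSeries]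

theorem levelSeries_union [Semiring R] (hdisj : Disjoint Y Z)
    (hY : ∀ j : ℕ, {y ∈ Y | w y = j}.Finite) (hZ : ∀ j : ℕ, {y ∈ Z | w y = j}.Finite) :
    levelSeries R w (Y ∪ Z) = levelSeries R w Y + levelSeries R w Z := by
  ext j
  have hlevel : {y ∈ Y ∪ Z | w y = j} = {y ∈ Y | w y = j} ∪ {y ∈ Z | w y = j} :=
    union_inter_distrib_right ..
  simp only [levelSeries, map_add, PowerSeries.coeff_mk, hlevel]
  rw [Set.ncard_union_eq (hdisj.mono (sep_subset _ _) (sep_subset _ _)) (hY j) (hZ j),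
    Nat.cast_add]

theorem levelSeries_eq_sum_fiber [Semiring R] {β : Type*} [Fintype β] (g : α → β)
    (hY : ∀ j : ℕ, {y ∈ Y | w y = j}.Finite) :
    levelSeries R w Y = ∑ b, levelSeries R w {y ∈ Y | g y = b} := by
  ext j
  have hlevel : {y ∈ Y | w y = j} = ⋃ b, {y ∈ {y ∈ Y | g y = b} | w y = j} := by
    ext y
    simp
  have hdisj : Pairwise (Function.onFun Disjoint fun b => {y ∈ {y ∈ Y | g y = b} | w y = j}) :=
    fun b b' hne => Set.disjoint_left.2 fun y hy hy' => hne (hy.1.2.symm.trans hy'.1.2)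
  simp only [levelSeries, map_sum, PowerSeries.coeff_mk, hlevel]
  rw [Set.ncard_iUnion_of_finite (fun b => (hY j).subset fun y hy => ⟨hy.1.1, hy.2⟩) hdisj,
    finsum_eq_sum_of_fintype, Nat.cast_sum]

theorem levelSeries_image_of_add [Semiring R] {f : α → α} {n : ℕ} (hf : InjOn f Y)
    (hw : ∀ y ∈ Y, 0 ≤ w y) (hadd : ∀ y ∈ Y, w (f y) = w y + n) :
    levelSeries R w (f '' Y) = PowerSeries.X ^ n * levelSeries R w Y := by
  ext j
  rw [PowerSeries.coeff_X_pow_mul']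
  simp only [levelSeries, PowerSeries.coeff_mk]
  split_ifs with hj
  · have hlevel : {z ∈ f '' Y | w z = j} = f '' {y ∈ Y | w y = (j - n : ℕ)} := by
      ext z
      constructor
      · rintro ⟨⟨y, hy, rfl⟩, hz⟩
        exact ⟨y, ⟨hy, by rw [Nat.cast_sub hj, ← hz, hadd y hy, add_sub_cancel_right]⟩, rfl⟩
      · rintro ⟨y, ⟨hy, hwy⟩, rfl⟩
        exact ⟨⟨y, hy, rfl⟩, by rw [hadd y hy, hwy, Nat.cast_sub hj, sub_add_cancel]⟩
    rw [hlevel, (hf.mono (sep_subset _ _)).ncard_image]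
  · have hlevel : {z ∈ f '' Y | w z = j} = ∅ := by
      refine eq_empty_of_forall_notMem ?_
      rintro _ ⟨⟨y, hy, rfl⟩, hz⟩
      have hlt : (j : ℝ) < n := by exact_mod_cast not_le.1 hj
      linarith [hw y hy, hadd y hy]
    rw [hlevel, Set.ncard_empty, Nat.cast_zero]

/-- The polynomials inside the ring of power series. -/
noncomputable def polynomialSubring (R : Type*) [CommRing R] : Subring (PowerSeries R) :=
  (Polynomial.coeToPowerSeries.ringHom (R := R)).range

theorem one_sub_X_pow_mem_polynomialSubring [CommRing R] (n : ℕ) :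
    1 - PowerSeries.X ^ n ∈ polynomialSubring R :=
  ⟨1 - Polynomial.X ^ n, by simp⟩

theorem C_mem_polynomialSubring [CommRing R] (r : R) :
    PowerSeries.C r ∈ polynomialSubring R :=
  ⟨Polynomial.C r, by simp⟩

theorem levelSeries_mem_polynomialSubring [CommRing R] (hbdd : BddAbove (w '' Y)) :
    levelSeries R w Y ∈ polynomialSubring R := by
  obtain ⟨b, hb⟩ := hbdd
  obtain ⟨N, hN⟩ := exists_nat_gt b
  refine ⟨PowerSeries.trunc N (levelSeries R w Y), ?_⟩
  ext j
  rw [Polynomial.coeToPowerSeries.ringHom_apply, Polynomial.coeff_coe, PowerSeries.coeff_trunc]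
  refine ite_eq_left_iff.2 fun hj => ?_
  have hlevel : {y ∈ Y | w y = j} = ∅ := eq_empty_of_forall_notMem fun y ⟨hy, hwy⟩ => by
    have hle : w y ≤ b := hb (mem_image_of_mem w hy)
    have hNj : (N : ℝ) ≤ j := by exact_mod_cast not_lt.1 hj
    linarith
  simp [levelSeries, hlevel]

end LevelSeries

theorem support_add_single_one {ι : Type*} [DecidableEq ι] {t : ι → ℝ} {i : ι} (hi : 0 < t i) :
    Function.support (t + Pi.single i 1) = Function.support t := by
  ext k
  rcases eq_or_ne k i with rfl | hk
  · simp [hi.ne', (add_pos hi one_pos).ne']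
  · simp [hk]

section UnitSteps

variable {R : Type*} [CommRing R] {ι : Type*} [Fintype ι] [DecidableEq ι] {n : ι → ℕ}
  {Y : Set (ι → ℝ)}

theorem levelSeries_le_one_eq_mul {i : ι}
    (hfin : ∀ j : ℕ, {t ∈ Y | ∑ k, n k * t k = j}.Finite) (hnonneg : ∀ t ∈ Y, 0 ≤ t)
    (hpos : ∀ t ∈ Y, 0 < t i)
    (hshift : ∀ t : ι → ℝ, 0 < t i → (t + Pi.single i 1 ∈ Y ↔ t ∈ Y)) :
    levelSeries R (fun t => ∑ k, n k * t k) {t ∈ Y | t i ≤ 1} =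
      (1 - PowerSeries.X ^ n i) * levelSeries R (fun t => ∑ k, n k * t k) Y := by
  have hunion : Y = {t ∈ Y | t i ≤ 1} ∪ (· + Pi.single i 1) '' Y := by
    ext t
    constructor
    · intro ht
      refine (le_or_gt (t i) 1).imp (fun hle => ⟨ht, hle⟩) fun hgt => ?_
      refine ⟨t - Pi.single i 1, (hshift _ (by simpa using hgt)).1 ?_, sub_add_cancel _ _⟩
      rwa [sub_add_cancel]
    · rintro (ht | ⟨s, hs, rfl⟩)
      exacts [ht.1, (hshift s (hpos s hs)).2 hs]
  have himage : (· + Pi.single i 1) '' Y ⊆ Y := subset_union_right.trans hunion.ge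
  have hdisj : Disjoint {t ∈ Y | t i ≤ 1} ((· + Pi.single i 1) '' Y) := by
    refine Set.disjoint_left.2 ?_
    rintro _ ⟨-, hle⟩ ⟨s, hs, rfl⟩
    have hs' := hpos s hs
    simp only [Pi.add_apply, Pi.single_eq_same] at hle
    linarith
  have hsplit := levelSeries_union (R := R) hdisj
    (fun j => (hfin j).subset fun t ht => ⟨ht.1.1, ht.2⟩)
    (fun j => (hfin j).subset fun t ht => ⟨himage ht.1, ht.2⟩)
  rw [← hunion, levelSeries_image_of_add (add_left_injective _).injOn
    (fun t ht => Finset.sum_nonneg fun k _ => mul_nonneg (Nat.cast_nonneg _) (hnonneg t ht k))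
    (n := n i) fun t _ => by simp [mul_add, Finset.sum_add_distrib, Pi.single_apply]] at hsplit
  linear_combination -hsplit

theorem levelSeries_box_eq_prod_mul (B : Finset ι)
    (hfin : ∀ j : ℕ, {t ∈ Y | ∑ k, n k * t k = j}.Finite) (hnonneg : ∀ t ∈ Y, 0 ≤ t)
    (hpos : ∀ t ∈ Y, ∀ i ∈ B, 0 < t i)
    (hshift : ∀ i ∈ B, ∀ t : ι → ℝ, 0 < t i → (t + Pi.single i 1 ∈ Y ↔ t ∈ Y)) :
    levelSeries R (fun t => ∑ k, n k * t k) {t ∈ Y | ∀ i ∈ B, t i ≤ 1} =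
      (∏ i ∈ B, (1 - PowerSeries.X ^ n i)) * levelSeries R (fun t => ∑ k, n k * t k) Y := by
  induction B using Finset.induction_on with
  | empty => simp
  | insert i B hi ih =>
    simp only [Finset.forall_mem_insert] at hpos hshift
    have hbox : {t ∈ Y | ∀ k ∈ insert i B, t k ≤ 1} =
        {t ∈ {t ∈ Y | ∀ k ∈ B, t k ≤ 1} | t i ≤ 1} := by
      ext t
      simp only [mem_ofPred_eq, Finset.forall_mem_insert]
      tauto
    rw [hbox, Finset.prod_insert hi, mul_assoc, ← ih (fun t ht => (hpos t ht).2) hshift.2]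
    refine levelSeries_le_one_eq_mul (fun j => (hfin j).subset fun t ht => ⟨ht.1.1, ht.2⟩)
      (fun t ht => hnonneg t ht.1) (fun t ht => (hpos t ht.1).1) fun t ht => ?_
    refine and_congr (hshift.1 t ht) (forall₂_congr fun k hk => ?_)
    simp [show k ≠ i from fun h => hi (h ▸ hk)]

theorem prod_mul_levelSeries_mem_polynomialSubring (T : Finset ι)
    (hfin : ∀ j : ℕ, {t ∈ Y | ∑ k, n k * t k = j}.Finite) (hnonneg : ∀ t ∈ Y, 0 ≤ t)
    (hsupp : ∀ t ∈ Y, Function.support t = T)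
    (hshift : ∀ i ∈ T, ∀ t : ι → ℝ, 0 < t i → (t + Pi.single i 1 ∈ Y ↔ t ∈ Y)) :
    (∏ i ∈ T, (1 - PowerSeries.X ^ n i)) * levelSeries R (fun t => ∑ k, n k * t k) Y ∈
      polynomialSubring R := by
  have hne : ∀ t ∈ Y, ∀ i, t i ≠ 0 ↔ i ∈ T := fun t ht i => Set.ext_iff.1 (hsupp t ht) i
  rw [← levelSeries_box_eq_prod_mul T hfin hnonneg
    (fun t ht i hi => (hnonneg t ht i).lt_of_ne' ((hne t ht i).2 hi)) hshift]
  refine levelSeries_mem_polynomialSubring ⟨∑ k, (n k : ℝ), ?_⟩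
  rintro _ ⟨t, ⟨ht, hle⟩, rfl⟩
  refine Finset.sum_le_sum fun k _ => mul_le_of_le_one_right (Nat.cast_nonneg _) ?_
  by_cases hk : k ∈ T
  · exact hle k hk
  · rw [not_not.1 (mt (hne t ht k).1 hk)]
    exact zero_le_one

end UnitSteps

/-- The linear map sending coefficients `t` to the combination `∑ i, t i • a i` of a family of
exponent vectors. -/
noncomputable def expCombination {d : ℕ} {ι : Type*} [Fintype ι] (a : ι → Fin d → ℕ) :
    (ι → ℝ) →ₗ[ℝ] (Fin d → ℝ) :=
  Fintype.linearCombination ℝ fun i => expToReal d (a i)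

/-- The cone spanned by the exponent vectors `a i` is the whole nonnegative orthant. -/
def SpansOrthant {d : ℕ} {ι : Type*} [Fintype ι] (a : ι → Fin d → ℕ) : Prop :=
  ∀ y : Fin d → ℝ, 0 ≤ y → ∃ t : ι → ℝ, 0 ≤ t ∧ expCombination a t = y

/-- The optimal representations of the vectors `v + 𝟏`, `v ∈ ℕ^d`. -/
def optimalLatticeReps {d : ℕ} {ι : Type*} [Fintype ι] (a : ι → Fin d → ℕ) : Set (ι → ℝ) :=
  {t | IsOptimalRep (expCombination a) t ∧ ∃ v, expToReal d v + 1 = expCombination a t}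

section Newton

variable {d : ℕ} {ι : Type*} [Fintype ι] {a : ι → Fin d → ℕ} {S : Set (Fin d → ℕ)}

theorem expToReal_injective : Function.Injective (expToReal d) := fun v w h =>
  funext fun k => by simpa [expToReal] using congrFun h k

theorem expToReal_add_one_pos (v : Fin d → ℕ) (k : Fin d) : 0 < (expToReal d v + 1) k := by
  simp only [expToReal, Pi.add_apply, Pi.one_apply]
  positivity

theorem exists_expToReal_add_one_eq_iff {y : Fin d → ℝ} :
    (∃ v, expToReal d v + 1 = y) ↔ ∀ k, 0 < y k ∧ Int.fract (y k) = 0 := by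
  constructor
  · rintro ⟨v, rfl⟩ k
    exact ⟨expToReal_add_one_pos v k, by simp [expToReal]⟩
  · intro h
    have hnat : ∀ k, ∃ n : ℕ, (n : ℝ) + 1 = y k := fun k => by
      obtain ⟨m, hm⟩ := Int.fract_eq_zero_iff.1 (h k).2
      have hpos : 0 < m := by exact_mod_cast hm ▸ (h k).1
      obtain ⟨n, rfl⟩ := Int.eq_succ_of_zero_lt hpos
      exact ⟨n, by exact_mod_cast hm⟩
    choose v hv using hnat
    exact ⟨v, funext hv⟩

theorem expCombination_apply (t : ι → ℝ) (k : Fin d) :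
    expCombination a t k = ∑ i, t i * a i k := by
  simp [expCombination, Fintype.linearCombination_apply, expToReal]

theorem expCombination_single [DecidableEq ι] (i : ι) (r : ℝ) :
    expCombination a (Pi.single i r) = r • expToReal d (a i) :=
  Fintype.linearCombination_apply_single ..

theorem expCombination_pos_iff {t : ι → ℝ} (ht : 0 ≤ t) {k : Fin d} :
    0 < expCombination a t k ↔ ∃ i, i ∈ Function.support t ∧ a i k ≠ 0 := by
  rw [expCombination_apply,
    Finset.sum_pos_iff_of_nonneg fun i _ => mul_nonneg (ht i) (Nat.cast_nonneg _)]
  refine exists_congr fun i => ?_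
  rw [(mul_nonneg (ht i) (Nat.cast_nonneg _)).lt_iff_ne']
  simp

theorem spansOrthant_of_single (h : ∀ k, ∃ N : ℕ, N ≠ 0 ∧ Pi.single k N ∈ range a) :
    SpansOrthant a := by
  classical
  choose N hN e he using h
  refine fun y hy => ⟨∑ k, Pi.single (e k) (y k / N k), Finset.sum_nonneg fun k _ =>
    Pi.single_nonneg.2 (div_nonneg (hy k) (Nat.cast_nonneg _)), ?_⟩
  ext m
  simp [expCombination_single, he, expToReal, Finset.sum_apply, Pi.single_apply, hN]

theorem exists_finite_upperClosure_eq (hS : IsUpperSet S) (hcof : Sᶜ.Finite) :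
    ∃ V : Set (Fin d → ℕ), V.Finite ∧ (upperClosure V : Set (Fin d → ℕ)) = S ∧
      ∀ k, ∃ N : ℕ, N ≠ 0 ∧ Pi.single k N ∈ V := by
  have haxis : ∀ k, ∃ N : ℕ, N ≠ 0 ∧ Pi.single k N ∈ S := fun k => by
    have hfin : {N : ℕ | Pi.single k N ∉ S}.Finite :=
      hcof.preimage (Pi.single_injective k).injOn
    obtain ⟨N, hN, hpos⟩ := hfin.infinite_compl.exists_gt 0
    exact ⟨N, hpos.ne', not_not.1 hN⟩
  choose N hN hNS using haxis
  refine ⟨{v | Minimal (· ∈ S) v} ∪ range fun k => Pi.single k (N k),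
    (WellQuasiOrderedLE.finite_of_isAntichain (setOfPred_minimal_antichain _)).union
      (finite_range _), ?_, fun k => ⟨N k, hN k, .inr ⟨k, rfl⟩⟩⟩
  refine Subset.antisymm (upperClosure_min ?_ hS) fun v hv => ?_
  · rintro v (hv | ⟨k, rfl⟩)
    exacts [hv.prop, hNS k]
  · obtain ⟨u, huv, hu⟩ := exists_minimal_le_of_wellFoundedLT (· ∈ S) v hv
    exact ⟨u, .inl hu, huv⟩

theorem smul_expToReal_mem_newtonPoly (hS : IsUpperSet S) {v : Fin d → ℕ} (hv : v ∈ S) {r : ℝ}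
    (hr : 1 ≤ r) : r • expToReal d v ∈ newtonPoly d S := by
  obtain ⟨n, hn⟩ := exists_nat_ge r
  have hn1 : 1 ≤ n := by exact_mod_cast hr.trans hn
  have hnv : n • v ∈ S := hS (le_self_nsmul zero_le (Nat.one_le_iff_ne_zero.1 hn1)) hv
  have hconv : Convex ℝ {r : ℝ | r • expToReal d v ∈ newtonPoly d S} :=
    (convex_convexHull ℝ _).linear_preimage (LinearMap.toSpanSingleton ℝ _ (expToReal d v))
  refine hconv.ordConnected.out (x := 1) (y := n) ?_ ?_ ⟨hr, hn⟩
  · exact subset_convexHull ℝ _ ⟨v, hv, (one_smul ℝ _).symm⟩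
  · exact subset_convexHull ℝ _ ⟨n • v, hnv, by ext k; simp [expToReal]⟩

theorem newtonPoly_upperClosure_eq (ha : SpansOrthant a) :
    newtonPoly d (upperClosure (range a)) = expCombination a '' {t | 0 ≤ t ∧ 1 ≤ ∑ i, t i} := by
  classical
  refine Subset.antisymm (convexHull_min ?_ ?_) ?_
  · rintro _ ⟨v, ⟨_, ⟨i, rfl⟩, hle⟩, rfl⟩
    have hle' : expToReal d (a i) ≤ expToReal d v := fun k => Nat.cast_le.2 (hle k)
    obtain ⟨r, hr, hr'⟩ := ha _ (sub_nonneg.2 hle')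
    refine ⟨Pi.single i 1 + r, ⟨add_nonneg (Pi.single_nonneg.2 zero_le_one) hr, ?_⟩, ?_⟩
    · simpa [Finset.sum_add_distrib] using Finset.sum_nonneg fun k _ => hr k
    · rw [map_add, hr', expCombination_single, one_smul, add_sub_cancel]
  · have hhalf : Convex ℝ {t : ι → ℝ | 1 ≤ ∑ i, t i} := by
      simpa using convex_halfSpace_ge (∑ i, LinearMap.proj i : (ι → ℝ) →ₗ[ℝ] ℝ).isLinear 1
    exact ((convex_Ici 0).inter hhalf).linear_image _
  · rintro _ ⟨t, ⟨ht, hsum⟩, rfl⟩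
    have hpos : 0 < ∑ i, t i := one_pos.trans_le hsum
    have hcombo : expCombination a t =
        ∑ i, (t i / ∑ j, t j) • (∑ j, t j) • expToReal d (a i) := by
      simp [expCombination, Fintype.linearCombination_apply, smul_smul, hpos.ne']
    rw [hcombo]
    exact (convex_convexHull ℝ _).sum_mem (fun i _ => div_nonneg (ht i) hpos.le)
      (by rw [← Finset.sum_div, div_self hpos.ne']) fun i _ =>
        smul_expToReal_mem_newtonPoly (UpperSet.upper _)
          (subset_upperClosure (mem_range_self i)) hsum

theorem smul_newtonPoly_upperClosure_eq (ha : SpansOrthant a) {c : ℝ} (hc : 0 < c) :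
    c • newtonPoly d (upperClosure (range a)) =
      expCombination a '' {t | 0 ≤ t ∧ c ≤ ∑ i, t i} := by
  have hscale : c • {t : ι → ℝ | 0 ≤ t ∧ 1 ≤ ∑ i, t i} = {t | 0 ≤ t ∧ c ≤ ∑ i, t i} := by
    ext t
    rw [mem_smul_set_iff_inv_smul_mem₀ hc.ne']
    simp [← Finset.mul_sum, le_inv_mul_iff₀ hc, smul_nonneg_iff_nonneg_of_pos_left (inv_pos.2 hc)]
  rw [newtonPoly_upperClosure_eq ha, ← hscale, image_smul_set]

theorem mem_interior_smul_newtonPoly_iff (ha : SpansOrthant a) {c : ℝ} (hc : 0 < c)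
    {y : Fin d → ℝ} (hy : ∀ k, 0 < y k) :
    y ∈ interior (c • newtonPoly d (upperClosure (range a))) ↔
      ∃ t : ι → ℝ, 0 ≤ t ∧ c < ∑ i, t i ∧ expCombination a t = y := by
  rw [smul_newtonPoly_upperClosure_eq ha hc]
  constructor
  -- An interior point `y` can be pulled towards the origin without leaving `c • P`, and rescaling
  -- back raises the coordinate sum above `c`.
  · intro hint
    have htend : Tendsto (fun b : ℝ => b • y) (nhdsWithin 1 (Iio 1)) (nhds y) := by
      have : ContinuousAt (fun b : ℝ => b • y) 1 := by fun_prop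
      simpa using this.tendsto.mono_left nhdsWithin_le_nhds
    obtain ⟨b, ⟨t, ⟨ht, hsum⟩, htb⟩, hb0, hb1⟩ := ((htend.eventually
      (mem_interior_iff_mem_nhds.1 hint)).and (Ioo_mem_nhdsLT (zero_lt_one' ℝ))).exists
    refine ⟨b⁻¹ • t, smul_nonneg (inv_nonneg.2 hb0.le) ht, ?_, ?_⟩
    · calc c < b⁻¹ * c := lt_mul_of_one_lt_left hc ((one_lt_inv₀ hb0).2 hb1)
        _ ≤ b⁻¹ * ∑ i, t i := by gcongr
        _ = ∑ i, (b⁻¹ • t) i := by simp [Finset.mul_sum]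
    · rw [map_smul, htb, inv_smul_smul₀ hb0.ne']
  · rintro ⟨t, ht, hlt, rfl⟩
    have hpos : 0 < ∑ i, t i := hc.trans hlt
    set b := c / ∑ i, t i
    have hb0 : 0 < b := div_pos hc hpos
    refine mem_interior.2 ⟨univ.pi fun k => Ioi (b * expCombination a t k), fun z hz => ?_,
      isOpen_set_pi finite_univ fun k _ => isOpen_Ioi, fun k _ => ?_⟩
    · obtain ⟨r, hr, hrz⟩ := ha (z - b • expCombination a t) fun k =>
        sub_nonneg.2 (le_of_lt (hz k trivial))
      refine ⟨b • t + r, ⟨add_nonneg (smul_nonneg hb0.le ht) hr, ?_⟩, by simp [hrz]⟩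
      have hbsum : b * ∑ i, t i = c := div_mul_cancel₀ _ hpos.ne'
      simpa [Finset.sum_add_distrib, ← Finset.mul_sum, hbsum] using
        Finset.sum_nonneg fun k _ => hr k
    · exact mul_lt_of_lt_one_left (hy k) ((div_lt_one hpos).2 hlt)

theorem mem_boundary_smul_newtonPoly_iff (ha : SpansOrthant a) {c : ℝ} (hc : 0 < c)
    {y : Fin d → ℝ} (hy : ∀ k, 0 < y k) :
    y ∈ c • newtonPoly d (upperClosure (range a)) \
        interior (c • newtonPoly d (upperClosure (range a))) ↔
      ∃ t, IsOptimalRep (expCombination a) t ∧ expCombination a t = y ∧ ∑ i, t i = c := by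
  rw [Set.mem_sdiff, mem_interior_smul_newtonPoly_iff ha hc hy,
    smul_newtonPoly_upperClosure_eq ha hc]
  constructor
  · rintro ⟨⟨t₀, ⟨ht₀, hle⟩, rfl⟩, hmax⟩
    have hmax' : ∀ s : ι → ℝ, 0 ≤ s → expCombination a s = expCombination a t₀ →
        ∑ i, s i ≤ c := fun s hs hst => not_lt.1 fun hlt => hmax ⟨s, hs, hlt, hst⟩
    have hsum₀ : ∑ i, t₀ i = c := (hmax' t₀ ht₀ rfl).antisymm hle
    simpa only [hsum₀] using exists_isOptimalRep ht₀ (by simpa only [hsum₀] using hmax')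
  · rintro ⟨t, ht, rfl, rfl⟩
    exact ⟨⟨t, ⟨ht.nonneg, le_rfl⟩, rfl⟩,
      fun ⟨s, hs, hlt, hst⟩ => (ht.sum_le hs hst).not_gt hlt⟩

theorem multJump_upperClosure_eq_ncard (ha : SpansOrthant a) {c : ℝ} (hc : 0 < c) :
    multJump d (upperClosure (range a)) c = {t ∈ optimalLatticeReps a | ∑ i, t i = c}.ncard := by
  have hinj : Function.Injective fun v : Fin d → ℕ => expToReal d v + 1 :=
    (add_left_injective 1).comp expToReal_injective
  have hinjOn : InjOn (expCombination a) {t ∈ optimalLatticeReps a | ∑ i, t i = c} :=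
    IsOptimalRep.injOn.mono fun t ht => ht.1.1
  rw [multJump, Nat.card_coe_set_eq, ← Set.ncard_image_of_injective _ hinj,
    ← hinjOn.ncard_image]
  congr 1
  ext y
  constructor
  · rintro ⟨v, hv, rfl⟩
    obtain ⟨t, ht, htv, hsum⟩ :=
      (mem_boundary_smul_newtonPoly_iff ha hc (expToReal_add_one_pos v)).1 hv
    exact ⟨t, ⟨⟨ht, v, htv.symm⟩, hsum⟩, htv⟩
  · rintro ⟨t, ⟨⟨ht, v, hv⟩, hsum⟩, rfl⟩
    exact ⟨v, (mem_boundary_smul_newtonPoly_iff ha hc (expToReal_add_one_pos v)).2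
      ⟨t, ht, hv.symm, hsum⟩, hv⟩

theorem finite_optimalLatticeReps_sum_le (c : ℝ) :
    {t ∈ optimalLatticeReps a | ∑ i, t i ≤ c}.Finite := by
  have hinjOn : InjOn (expCombination a) {t ∈ optimalLatticeReps a | ∑ i, t i ≤ c} :=
    IsOptimalRep.injOn.mono fun t ht => ht.1.1
  refine Set.Finite.of_finite_image (((finite_Iic fun k => ⌊∑ i, c * a i k⌋₊).image
    fun v => expToReal d v + 1).subset ?_) hinjOn
  rintro _ ⟨t, ⟨⟨ht, v, hv⟩, hsum⟩, rfl⟩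
  refine ⟨v, fun k => Nat.le_floor ?_, hv⟩
  have hle : ∀ i, t i ≤ c := fun i =>
    (Finset.single_le_sum (fun i _ => ht.nonneg i) (Finset.mem_univ i)).trans hsum
  calc (v k : ℝ) ≤ (expToReal d v + 1) k := (lt_add_one _).le
    _ = ∑ i, t i * a i k := by rw [hv, expCombination_apply]
    _ ≤ ∑ i, c * a i k := by gcongr; exact hle _

theorem finite_optimalLatticeReps_level {ℓ : ℕ} (hℓ : 0 < ℓ) (j : ℕ) :
    {t ∈ optimalLatticeReps a | ∑ i, (ℓ : ℝ) * t i = j}.Finite :=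
  (finite_optimalLatticeReps_sum_le (j / ℓ)).subset fun t ⟨ht, hj⟩ =>
    ⟨ht, ((eq_div_iff (Nat.cast_ne_zero.2 hℓ.ne')).2
      (by rw [mul_comm, Finset.mul_sum, hj])).le⟩

theorem add_single_mem_optimalLatticeReps_iff [DecidableEq ι] {t : ι → ℝ} {i : ι}
    (hi : 0 < t i) : t + Pi.single i 1 ∈ optimalLatticeReps a ↔ t ∈ optimalLatticeReps a := by
  by_cases ht : 0 ≤ t
  swap
  · refine iff_of_false (fun h => ht fun k => ?_) fun h => ht h.1.nonneg
    rcases eq_or_ne k i with rfl | hk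
    · exact hi.le
    · simpa [hk] using h.1.nonneg k
  have ht' : 0 ≤ t + Pi.single i 1 := add_nonneg ht (Pi.single_nonneg.2 zero_le_one)
  have hsupp := support_add_single_one hi
  refine and_congr ⟨fun h => h.of_support_subset ht hsupp.ge,
    fun h => h.of_support_subset ht' hsupp.le⟩ ?_
  rw [exists_expToReal_add_one_eq_iff, exists_expToReal_add_one_eq_iff]
  refine forall_congr' fun k => and_congr ?_ ?_
  · rw [expCombination_pos_iff ht', expCombination_pos_iff ht, hsupp]
  · simp [map_add, expCombination_single, expToReal]

theorem one_sub_pow_mul_levelSeries_support_mem (R : Type*) [CommRing R] {ℓ : ℕ} (hℓ : 0 < ℓ)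
    (T : Set ι) : (1 - PowerSeries.X ^ ℓ) ^ d * levelSeries R (fun t => ∑ i, ℓ * t i)
      {t ∈ optimalLatticeReps a | Function.support t = T} ∈ polynomialSubring R := by
  classical
  lift T to Finset ι using T.toFinite
  rcases {t ∈ optimalLatticeReps a | Function.support t = T}.eq_empty_or_nonempty with he | hne
  · simp [he, levelSeries_empty]
  obtain ⟨t₀, ht₀, hT₀⟩ := hne
  have hcard : T.card ≤ d := by simpa using ht₀.1.card_le_finrank_of_subset_support hT₀.ge
  have hpoly := prod_mul_levelSeries_mem_polynomialSubring (R := R) (n := fun _ => ℓ) T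
    (Y := {t ∈ optimalLatticeReps a | Function.support t = T})
    (fun j => (finite_optimalLatticeReps_level hℓ j).subset fun t ht => ⟨ht.1.1, ht.2⟩)
    (fun t ht => ht.1.1.nonneg) (fun t ht => ht.2) fun i _ t hi =>
      and_congr (add_single_mem_optimalLatticeReps_iff (a := a) hi)
        (by rw [support_add_single_one hi])
  rw [Finset.prod_const] at hpoly
  rw [← pow_sub_mul_pow _ hcard, mul_assoc]
  exact mul_mem (pow_mem (one_sub_X_pow_mem_polynomialSubring ℓ) _) hpoly

theorem one_sub_pow_mul_levelSeries_mem (R : Type*) [CommRing R] {ℓ : ℕ} (hℓ : 0 < ℓ) :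
    (1 - PowerSeries.X ^ ℓ) ^ d * levelSeries R (fun t => ∑ i, ℓ * t i)
      (optimalLatticeReps a) ∈ polynomialSubring R := by
  rw [levelSeries_eq_sum_fiber Function.support (finite_optimalLatticeReps_level hℓ),
    Finset.mul_sum]
  exact sum_mem fun T _ => one_sub_pow_mul_levelSeries_support_mem R hℓ T

theorem mk_multJump_eq_levelSeries_sub (R : Type*) [CommRing R] (ha : SpansOrthant a) {ℓ : ℕ}
    (hℓ : 0 < ℓ) :
    (PowerSeries.mk fun j => if j = 0 then 0 else
      (multJump d (upperClosure (range a)) ((j : ℝ) / (ℓ : ℝ)) : R)) =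
      levelSeries R (fun t => ∑ i, ℓ * t i) (optimalLatticeReps a) -
        PowerSeries.C (PowerSeries.constantCoeff
          (levelSeries R (fun t => ∑ i, ℓ * t i) (optimalLatticeReps a))) := by
  ext j
  rcases eq_or_ne j 0 with rfl | hj
  · simp
  have hℓ' : (0 : ℝ) < ℓ := Nat.cast_pos.2 hℓ
  have hc : (0 : ℝ) < j / ℓ := div_pos (Nat.cast_pos.2 (Nat.pos_of_ne_zero hj)) hℓ'
  rw [map_sub, PowerSeries.coeff_C, if_neg hj, sub_zero, PowerSeries.coeff_mk, if_neg hj,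
    multJump_upperClosure_eq_ncard ha hc]
  simp only [levelSeries, PowerSeries.coeff_mk, eq_div_iff hℓ'.ne', Finset.sum_mul, mul_comm]

end Newton

theorem poincare_series_rational_general {R : Type*} [CommRing R] {d : ℕ} {S : Set (Fin d → ℕ)}
    (hS : IsUpperSet S) (hcof : Sᶜ.Finite) {ℓ : ℕ} (hℓ : 0 < ℓ) :
    ∃ q : Polynomial R, (1 - PowerSeries.X ^ ℓ) ^ d *
      (PowerSeries.mk fun j => if j = 0 then 0 else (multJump d S ((j : ℝ) / (ℓ : ℝ)) : R)) =
        (q : PowerSeries R) := by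
  obtain ⟨V, hV, rfl, haxis⟩ := exists_finite_upperClosure_eq hS hcof
  have := hV.fintype
  have ha : SpansOrthant ((↑) : V → Fin d → ℕ) :=
    spansOrthant_of_single (by simpa only [Subtype.range_coe] using haxis)
  have hφ := mk_multJump_eq_levelSeries_sub R ha hℓ
  have hlevel := one_sub_pow_mul_levelSeries_mem (a := ((↑) : V → Fin d → ℕ)) R hℓ
  rw [Subtype.range_coe] at hφ
  rw [hφ, mul_sub]
  obtain ⟨q, hq⟩ := sub_mem hlevel (mul_mem
    (pow_mem (one_sub_X_pow_mem_polynomialSubring ℓ) d) (C_mem_polynomialSubring _))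
  exact ⟨q, hq.symm⟩

/-- Monomial case of Theorem 6.1: for a cofinite monomial ideal `𝔞` and any positive
integer `ℓ`, the power series `φ(z) = ∑_{j ≥ 1} m(j/ℓ) z^j` becomes a polynomial after
multiplication by `(1 - z^ℓ)^d`; in particular the Poincaré series of `𝔞` is a rational
function of `z = T^{1/ℓ}`. -/
theorem poincare_series_rational (d : ℕ) (hd : 1 ≤ d) (k : Type*) [Field k]
    (S : Set (Fin d → ℕ)) (hS : ∀ v ∈ S, ∀ w : Fin d → ℕ, v + w ∈ S)
    (hcof : (Sᶜ : Set (Fin d → ℕ)).Finite)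
    (ℓ : ℕ) (hℓ : 0 < ℓ)
    (φ : PowerSeries ℚ)
    (hφ : φ = PowerSeries.mk fun j =>
      if j = 0 then 0 else (multJump d S ((j : ℝ) / (ℓ : ℝ)) : ℚ)) :
    ∃ q : Polynomial ℚ, (1 - PowerSeries.X ^ ℓ) ^ d * φ = (q : PowerSeries ℚ) := by
  subst hφ
  have hS' : IsUpperSet S := fun v w hvw hv => add_tsub_cancel_of_le hvw ▸ hS v hv (w - v)
  exact poincare_series_rational_general hS' hcof hℓ
end

section
/- Let 𝔞 be a cofinite monomial ideal in k[x₁,…,x_d]. Then there exists a positive integer ℓ such that for every real number c > 0 with m(c) > 0 one has ℓ·c ∈ ℤ. In particular, every jumping number of 𝔞 is rational, and the set of jumping numbers of 𝔞 is a discrete subset of ℝ. (Monomial case of the candidate jumping number structure from Section 2.1.1.) -/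
open Set Filter Pointwise MeasureTheory

/-!
A jumping number `c` comes with a lattice point `v + 𝟏 = c • p`, where `p` has positive coordinates
and lies on the boundary of the Newton polyhedron. A supporting hyperplane at `p` can be normalised
to `a ⬝ᵥ x = 1` with `a ≥ 0`, and `p` is a convex combination of the exponents lying on it. A
`ℚ`-linear retraction `ℝ → ℚ` turns `a` into a rational vector `q` that still takes the value `1` at
all these exponents, hence at `p`, so that `c = c * (q ⬝ᵥ p) = q ⬝ᵥ (v + 𝟏)` has a denominator
depending only on the face of the polyhedron. By Dickson's lemma there are finitely many faces.
-/

section RationalVectors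

theorem exists_dotProduct_eq_of_dotProduct_algebraMap_eq (K : Type*) {L ι : Type*} [Field K]
    [Ring L] [Nontrivial L] [Algebra K L] [Fintype ι] (a : ι → L) :
    ∃ q : ι → K, ∀ (w : ι → K) (r : K),
      a ⬝ᵥ (algebraMap K L ∘ w) = algebraMap K L r → q ⬝ᵥ w = r := by
  obtain ⟨φ, hφ⟩ := LinearMap.exists_leftInverse_of_injective (Algebra.linearMap K L)
    (LinearMap.ker_eq_bot.2 (algebraMap K L).injective)
  have hφ_algebraMap (r : K) : φ (algebraMap K L r) = r := LinearMap.congr_fun hφ r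
  refine ⟨φ ∘ a, fun w r h => ?_⟩
  rw [← hφ_algebraMap r, ← h]
  simp only [dotProduct, Function.comp_apply, map_sum, ← Algebra.commutes, ← Algebra.smul_def,
    map_smul, smul_eq_mul, mul_comm]

theorem exists_pos_forall_natCast_mul_eq_intCast {κ : Type*} [Finite κ] (q : κ → ℚ) :
    ∃ ℓ : ℕ, 0 < ℓ ∧ ∀ k, ∃ z : ℤ, (ℓ : ℚ) * q k = z := by
  have := Fintype.ofFinite κ
  refine ⟨∏ k, (q k).den, Finset.prod_pos fun k _ => (q k).pos, fun k => ?_⟩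
  obtain ⟨e, he⟩ := Finset.dvd_prod_of_mem (fun k => (q k).den) (Finset.mem_univ k)
  refine ⟨e * (q k).num, ?_⟩
  rw [he]
  push_cast
  rw [← Rat.mul_den_eq_num (q k)]
  ring

theorem discreteTopology_of_natCast_mul_eq_intCast {A : Set ℝ} {ℓ : ℕ} (hℓ : 0 < ℓ)
    (hA : ∀ c ∈ A, ∃ z : ℤ, (ℓ : ℝ) * c = z) : DiscreteTopology A := by
  have hdiscrete : DiscreteTopology (AddSubgroup.zmultiples (ℓ : ℝ)⁻¹) := inferInstance
  refine hdiscrete.of_subset fun c hc => ?_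
  obtain ⟨z, hz⟩ := hA c hc
  refine ⟨z, ?_⟩
  simp only [zsmul_eq_mul, ← hz]
  field_simp

end RationalVectors

section OrderAndConvexity

theorem isUpperSet_of_forall_add_mem {M : Type*} [Add M] [LE M] [ExistsAddOfLE M] {A : Set M}
    (hA : ∀ v ∈ A, ∀ w, v + w ∈ A) : IsUpperSet A := fun v _ hvw hv => by
  obtain ⟨w, rfl⟩ := exists_add_of_le hvw
  exact hA v hv w

theorem dotProduct_eq_dotProduct_iff_of_le {ι R : Type*} [Fintype ι] [Ring R] [PartialOrder R]
    [IsOrderedRing R] [NoZeroDivisors R] {a x y : ι → R} (ha : 0 ≤ a) (hxy : x ≤ y) :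
    a ⬝ᵥ x = a ⬝ᵥ y ↔ ∀ i, x i = y i ∨ a i = 0 := by
  rw [dotProduct, dotProduct, Finset.sum_eq_sum_iff_of_le fun i _ =>
    mul_le_mul_of_nonneg_left (hxy i) (ha i)]
  simp only [Finset.mem_univ, true_implies, mul_eq_mul_left_iff]

theorem convexHull_range_natCast (𝕜 : Type*) [Field 𝕜] [LinearOrder 𝕜] [IsStrictOrderedRing 𝕜]
    [Archimedean 𝕜] : convexHull 𝕜 (range ((↑) : ℕ → 𝕜)) = Ici 0 := by
  refine (convexHull_min (range_subset_iff.2 Nat.cast_nonneg) (convex_Ici 0)).antisymm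
    fun x (hx : 0 ≤ x) => ?_
  obtain ⟨n, hn⟩ := exists_nat_ge x
  have hseg : x ∈ segment 𝕜 ((0 : ℕ) : 𝕜) n := by
    rw [segment_eq_Icc (Nat.cast_le.2 n.zero_le)]
    simpa using ⟨hx, hn⟩
  exact (convex_convexHull 𝕜 _).segment_subset (subset_convexHull 𝕜 _ (mem_range_self 0))
    (subset_convexHull 𝕜 _ (mem_range_self n)) hseg

theorem mem_convexHull_inter_of_forall_le {𝕜 E : Type*} [Field 𝕜] [LinearOrder 𝕜]
    [IsStrictOrderedRing 𝕜] [AddCommGroup E] [Module 𝕜 E] {A : Set E} {f : E →ₗ[𝕜] 𝕜} {r : 𝕜}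
    (hA : ∀ x ∈ A, r ≤ f x) {p : E} (hp : p ∈ convexHull 𝕜 A) (hfp : f p = r) :
    p ∈ convexHull 𝕜 (A ∩ {x | f x = r}) := by
  let C : Set E := {x | r ≤ f x ∧ (f x = r → x ∈ convexHull 𝕜 (A ∩ {x | f x = r}))}
  have hAC : A ⊆ C := fun x hx => ⟨hA x hx, fun h => subset_convexHull 𝕜 _ ⟨hx, h⟩⟩
  have hC : Convex 𝕜 C := by
    refine convex_iff_forall_pos.2 fun x hx y hy s t hs ht hst => ?_
    have hexcess : f (s • x + t • y) - r = s * (f x - r) + t * (f y - r) := by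
      simp only [map_add, map_smul, smul_eq_mul]
      linear_combination r * hst
    have hx0 : 0 ≤ s * (f x - r) := mul_nonneg hs.le (sub_nonneg.2 hx.1)
    have hy0 : 0 ≤ t * (f y - r) := mul_nonneg ht.le (sub_nonneg.2 hy.1)
    refine ⟨by linarith, fun h => ?_⟩
    have hfx : f x = r :=
      sub_eq_zero.1 ((mul_eq_zero.1 (by linarith : s * (f x - r) = 0)).resolve_left hs.ne')
    have hfy : f y = r :=
      sub_eq_zero.1 ((mul_eq_zero.1 (by linarith : t * (f y - r) = 0)).resolve_left ht.ne')
    exact convex_convexHull 𝕜 _ (hx.2 hfx) (hy.2 hfy) hs.le ht.le hst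
  exact (convexHull_min hAC hC hp).2 hfp

theorem apply_nonneg_of_isUpperSet_of_forall_le {𝕜 E : Type*} [Field 𝕜] [LinearOrder 𝕜]
    [IsStrictOrderedRing 𝕜] [AddCommGroup E] [PartialOrder E] [IsOrderedAddMonoid E] [Module 𝕜 E]
    [PosSMulMono 𝕜 E] {C : Set E} (hC : IsUpperSet C) (hne : C.Nonempty) {f : E →ₗ[𝕜] 𝕜} {r : 𝕜}
    (hf : ∀ x ∈ C, r ≤ f x) {e : E} (he : 0 ≤ e) : 0 ≤ f e := by
  obtain ⟨x, hx⟩ := hne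
  by_contra! hneg
  set t : 𝕜 := (f x - r + 1) / -f e with ht
  have ht0 : 0 ≤ t := div_nonneg (by linarith [hf x hx]) (by linarith)
  have hte : t * f e = -(f x - r + 1) := by rw [ht]; field_simp [hneg.ne]
  have hle : r ≤ f x + t * f e := by
    simpa only [map_add, map_smul, smul_eq_mul] using
      hf (x + t • e) (hC (le_add_of_nonneg_right (smul_nonneg ht0 he)) hx)
  linarith

theorem interior_nonempty_of_isUpperSet {ι : Type*} [Finite ι] {C : Set (ι → ℝ)}
    (hC : IsUpperSet C) (hne : C.Nonempty) : (interior C).Nonempty := by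
  obtain ⟨x, hx⟩ := hne
  exact ⟨x + 1, hC.mem_interior_of_forall_lt (subset_closure hx) fun i => lt_add_one (x i)⟩

/-- The blocking polyhedron of `C`, parametrising the half-spaces `1 ≤ a ⬝ᵥ x` with `a ≥ 0` that
contain `C`. -/
def blocker {ι : Type*} [Fintype ι] (C : Set (ι → ℝ)) : Set (ι → ℝ) :=
  {a | 0 ≤ a ∧ ∀ x ∈ C, 1 ≤ a ⬝ᵥ x}

theorem exists_mem_blocker_dotProduct_eq_one {ι : Type*} [Fintype ι] {C : Set (ι → ℝ)}
    (hconv : Convex ℝ C) (hC : IsUpperSet C) (hne : C.Nonempty) {p : ι → ℝ}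
    (hp : p ∉ interior C) (hpos : ∀ i, 0 < p i) : ∃ a ∈ blocker C, a ⬝ᵥ p = 1 := by
  classical
  obtain ⟨f, hf, hfp⟩ := geometric_hahn_banach_of_nonempty_interior_point hconv hp
    (interior_nonempty_of_isUpperSet hC hne)
  obtain ⟨b, hb⟩ := (dotProductEquiv ℝ ι).surjective (-f.toLinearMap)
  have hbf (x : ι → ℝ) : b ⬝ᵥ x = -f x := LinearMap.congr_fun hb x
  have hbp (x : ι → ℝ) (hx : x ∈ C) : b ⬝ᵥ p ≤ b ⬝ᵥ x := by
    simpa only [hbf, neg_le_neg_iff] using hfp x hx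
  have hb0 : 0 ≤ b := fun i => by
    simpa using apply_nonneg_of_isUpperSet_of_forall_le hC hne
      (f := dotProductEquiv ℝ ι b) hbp
      (Pi.single_nonneg.2 zero_le_one : (0 : ι → ℝ) ≤ Pi.single i 1)
  have hb_ne : b ≠ 0 := by
    rintro rfl
    exact hf (ContinuousLinearMap.ext fun x => by simpa using hbf x)
  have hbp0 : 0 < b ⬝ᵥ p := by
    obtain ⟨i, hi⟩ := Function.ne_iff.1 hb_ne
    exact Finset.sum_pos' (fun j _ => mul_nonneg (hb0 j) (hpos j).le)
      ⟨i, Finset.mem_univ i, mul_pos ((hb0 i).lt_of_ne' hi) (hpos i)⟩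
  refine ⟨(b ⬝ᵥ p)⁻¹ • b, ⟨smul_nonneg (inv_nonneg.2 hbp0.le) hb0, fun x hx => ?_⟩, ?_⟩
  · rw [smul_dotProduct, smul_eq_mul, ← inv_mul_cancel₀ hbp0.ne']
    exact mul_le_mul_of_nonneg_left (hbp x hx) (inv_nonneg.2 hbp0.le)
  · rw [smul_dotProduct, smul_eq_mul, inv_mul_cancel₀ hbp0.ne']

end OrderAndConvexity

section NewtonPolyhedron

variable {d : ℕ} {S : Set (Fin d → ℕ)} {a : Fin d → ℝ}

theorem expToReal_add (v w : Fin d → ℕ) : expToReal d (v + w) = expToReal d v + expToReal d w :=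
  funext fun _ => Nat.cast_add _ _

theorem expToReal_le_expToReal {v w : Fin d → ℕ} :
    expToReal d v ≤ expToReal d w ↔ v ≤ w :=
  forall_congr' fun _ => Nat.cast_le

theorem expToReal_mem_newtonPoly {s : Fin d → ℕ} (hs : s ∈ S) : expToReal d s ∈ newtonPoly d S :=
  subset_convexHull ℝ _ (mem_image_of_mem _ hs)

theorem newtonPoly_univ : newtonPoly d univ = Ici 0 := by
  have himage : expToReal d '' univ = univ.pi fun _ => range ((↑) : ℕ → ℝ) := by
    rw [image_univ]
    exact range_piMap fun _ => ((↑) : ℕ → ℝ)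
  rw [newtonPoly, himage, convexHull_pi]
  simp only [convexHull_range_natCast, pi_univ_Ici]
  rfl

theorem newtonPoly_add (S T : Set (Fin d → ℕ)) :
    newtonPoly d (S + T) = newtonPoly d S + newtonPoly d T := by
  rw [newtonPoly, newtonPoly, newtonPoly, ← convexHull_add, ← image2_add, ← image2_add,
    image_image2_distrib expToReal_add]

theorem isUpperSet_newtonPoly (hS : IsUpperSet S) : IsUpperSet (newtonPoly d S) := by
  have hadd : S + univ ⊆ S := by
    rintro _ ⟨v, hv, w, -, rfl⟩
    exact hS le_self_add hv
  intro x y hxy hx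
  have hy : x + (y - x) ∈ newtonPoly d S + newtonPoly d univ :=
    add_mem_add hx (by rw [newtonPoly_univ]; exact sub_nonneg.2 hxy)
  rw [← newtonPoly_add, add_sub_cancel] at hy
  exact convexHull_mono (image_mono hadd) hy

/-- The exponents in `S` that lie on the face of the Newton polyhedron cut out by the hyperplane
`a ⬝ᵥ x = 1`; this is meant for `a ∈ blocker (newtonPoly d S)`. -/
def newtonFace (d : ℕ) (S : Set (Fin d → ℕ)) (a : Fin d → ℝ) : Set (Fin d → ℕ) :=
  {s ∈ S | a ⬝ᵥ expToReal d s = 1}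

theorem mem_newtonPoly_newtonFace (ha : a ∈ blocker (newtonPoly d S)) {p : Fin d → ℝ}
    (hp : p ∈ newtonPoly d S) (hap : a ⬝ᵥ p = 1) : p ∈ newtonPoly d (newtonFace d S a) := by
  have hface : expToReal d '' newtonFace d S a = expToReal d '' S ∩ {x | a ⬝ᵥ x = 1} :=
    image_inter_preimage (expToReal d) S {x | a ⬝ᵥ x = 1}
  rw [newtonPoly, hface]
  exact mem_convexHull_inter_of_forall_le (f := dotProductEquiv ℝ (Fin d) a)
    (fun x hx => ha.2 x (subset_convexHull ℝ _ hx)) hp hap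

theorem dotProduct_eq_of_mem_newtonPoly {q p : Fin d → ℝ} {r : ℝ}
    (hq : ∀ s ∈ S, q ⬝ᵥ expToReal d s = r) (hp : p ∈ newtonPoly d S) : q ⬝ᵥ p = r :=
  convexHull_min (forall_mem_image.2 hq)
    (convex_hyperplane (dotProductEquiv ℝ (Fin d) q).isLinear r) hp

theorem exists_rat_dotProduct_eq_one_on_newtonFace (S : Set (Fin d → ℕ)) (a : Fin d → ℝ) :
    ∃ q : Fin d → ℚ, ∀ s ∈ newtonFace d S a, ((↑) ∘ q : Fin d → ℝ) ⬝ᵥ expToReal d s = 1 := by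
  obtain ⟨q, hq⟩ := exists_dotProduct_eq_of_dotProduct_algebraMap_eq ℚ a
  refine ⟨q, fun s hs => ?_⟩
  have hcast : algebraMap ℚ ℝ ∘ (fun i => (s i : ℚ)) = expToReal d s :=
    funext fun i => Rat.cast_natCast (s i)
  have hqs : q ⬝ᵥ (fun i => (s i : ℚ)) = 1 := hq _ 1 (by rw [hcast, map_one, hs.2])
  simpa [dotProduct, expToReal] using congrArg ((↑) : ℚ → ℝ) hqs

theorem mem_newtonFace_iff_exists_minimal (ha : a ∈ blocker (newtonPoly d S)) {s : Fin d → ℕ} :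
    s ∈ newtonFace d S a ↔ s ∈ S ∧
      ∃ t ∈ newtonFace d {t | Minimal (· ∈ S) t} a, t ≤ s ∧ ∀ i, t i = s i ∨ a i = 0 := by
  have hiff {t : Fin d → ℕ} (hts : t ≤ s) :
      a ⬝ᵥ expToReal d t = a ⬝ᵥ expToReal d s ↔ ∀ i, t i = s i ∨ a i = 0 := by
    rw [dotProduct_eq_dotProduct_iff_of_le ha.1 (expToReal_le_expToReal.2 hts)]
    simp only [expToReal, Nat.cast_inj]
  constructor
  · rintro ⟨hs, has⟩
    obtain ⟨t, hts, ht⟩ := exists_minimal_le_of_wellFoundedLT (· ∈ S) s hs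
    have hat : a ⬝ᵥ expToReal d t = 1 :=
      le_antisymm (has ▸ dotProduct_le_dotProduct_of_nonneg_left
        (expToReal_le_expToReal.2 hts) ha.1) (ha.2 _ (expToReal_mem_newtonPoly ht.prop))
    exact ⟨hs, t, ⟨ht, hat⟩, hts, (hiff hts).1 (hat.trans has.symm)⟩
  · rintro ⟨hs, t, ⟨-, hat⟩, hts, h⟩
    exact ⟨hs, ((hiff hts).2 h).symm.trans hat⟩

theorem finite_newtonFace_image_blocker (d : ℕ) (S : Set (Fin d → ℕ)) :
    (newtonFace d S '' blocker (newtonPoly d S)).Finite := by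
  have hmin : {t | Minimal (· ∈ S) t}.Finite :=
    WellQuasiOrderedLE.finite_of_isAntichain (setOfPred_minimal_antichain _)
  -- A face is determined by its minimal exponents and its unbounded coordinate directions.
  let faceOf (D : Set (Fin d → ℕ) × Set (Fin d)) : Set (Fin d → ℕ) :=
    {s ∈ S | ∃ t ∈ D.1, t ≤ s ∧ ∀ i, t i = s i ∨ i ∈ D.2}
  refine ((hmin.finite_subsets.prod finite_univ).image faceOf).subset ?_
  rintro _ ⟨a, ha, rfl⟩
  exact ⟨(newtonFace d {t | Minimal (· ∈ S) t} a, {i | a i = 0}), ⟨sep_subset _ _, mem_univ _⟩,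
    Set.ext fun s => (mem_newtonFace_iff_exists_minimal ha).symm⟩

end NewtonPolyhedron

section JumpingNumbers

variable {d : ℕ} {S : Set (Fin d → ℕ)} {c : ℝ}

/-- The jumping numbers of the monomial ideal with exponent set `S`. Without cofiniteness the
multiplicity of a jumping number can be infinite, in which case `multJump` takes the junk value `0`,
so the definition asks for a boundary point instead of `0 < multJump d S c`. -/
def jumpingNumbers (d : ℕ) (S : Set (Fin d → ℕ)) : Set ℝ :=
  {c | 0 < c ∧ ∃ v : Fin d → ℕ,
    expToReal d v + 1 ∈ c • newtonPoly d S \ interior (c • newtonPoly d S)}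

theorem mem_jumpingNumbers_of_multJump_pos (hc : 0 < c) (hm : 0 < multJump d S c) :
    c ∈ jumpingNumbers d S :=
  ⟨hc, nonempty_coe_sort.1 (Nat.card_pos_iff.1 hm).1⟩

theorem exists_eq_dotProduct_of_mem_jumpingNumbers (hS : IsUpperSet S)
    (hc : c ∈ jumpingNumbers d S) :
    ∃ a ∈ blocker (newtonPoly d S), ∃ v : Fin d → ℕ, ∀ q : Fin d → ℝ,
      (∀ s ∈ newtonFace d S a, q ⬝ᵥ expToReal d s = 1) → c = q ⬝ᵥ expToReal d (v + 1) := by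
  obtain ⟨hc0, v, ⟨p, hp, hpv : c • p = expToReal d v + 1⟩, hv⟩ := hc
  have hp_int : p ∉ interior (newtonPoly d S) := fun h =>
    hv (by rw [interior_smul₀ hc0.ne', ← hpv]; exact smul_mem_smul_set h)
  have hp_pos (i : Fin d) : 0 < p i := by
    have hcp : c * p i = v i + 1 := congrFun hpv i
    exact pos_of_mul_pos_right (by rw [hcp]; positivity) hc0.le
  obtain ⟨a, ha, hap⟩ := exists_mem_blocker_dotProduct_eq_one (convex_convexHull ℝ _)
    (isUpperSet_newtonPoly hS) ⟨p, hp⟩ hp_int hp_pos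
  refine ⟨a, ha, v, fun q hq => ?_⟩
  have hone : expToReal d 1 = 1 := funext fun _ => Nat.cast_one
  have hqp : q ⬝ᵥ p = 1 :=
    dotProduct_eq_of_mem_newtonPoly hq (mem_newtonPoly_newtonFace ha hp hap)
  rw [expToReal_add, hone, ← hpv, dotProduct_smul, hqp, smul_eq_mul, mul_one]

theorem exists_common_denominator_jumpingNumbers (hS : IsUpperSet S) :
    ∃ ℓ : ℕ, 0 < ℓ ∧ ∀ c ∈ jumpingNumbers d S, ∃ z : ℤ, (ℓ : ℝ) * c = z := by
  have hfinite : Finite (newtonFace d S '' blocker (newtonPoly d S)) :=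
    finite_newtonFace_image_blocker d S
  have hrat (F : newtonFace d S '' blocker (newtonPoly d S)) :
      ∃ q : Fin d → ℚ, ∀ s ∈ F.1, ((↑) ∘ q : Fin d → ℝ) ⬝ᵥ expToReal d s = 1 := by
    obtain ⟨_, a, -, rfl⟩ := F
    exact exists_rat_dotProduct_eq_one_on_newtonFace S a
  choose q hq using hrat
  obtain ⟨ℓ, hℓ, hint⟩ :=
    exists_pos_forall_natCast_mul_eq_intCast fun k : _ × Fin d => q k.1 k.2
  choose z hz using hint
  refine ⟨ℓ, hℓ, fun c hc => ?_⟩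
  obtain ⟨a, ha, v, hcv⟩ := exists_eq_dotProduct_of_mem_jumpingNumbers hS hc
  let F : newtonFace d S '' blocker (newtonPoly d S) := ⟨_, mem_image_of_mem _ ha⟩
  have hzF (i : Fin d) : (ℓ : ℝ) * q F i = z (F, i) := by exact_mod_cast hz (F, i)
  refine ⟨∑ i, z (F, i) * (v i + 1), ?_⟩
  rw [hcv _ (hq F), dotProduct, Finset.mul_sum]
  push_cast
  exact Finset.sum_congr rfl fun i _ => by simp [expToReal, ← hzF, mul_assoc]

end JumpingNumbers

theorem jumping_numbers_common_denominator_general {d : ℕ} {S : Set (Fin d → ℕ)}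
    (hS : ∀ v ∈ S, ∀ w : Fin d → ℕ, v + w ∈ S) :
    (∃ ℓ : ℕ, 0 < ℓ ∧ ∀ c ∈ jumpingNumbers d S, ∃ z : ℤ, (ℓ : ℝ) * c = z) ∧
    (∀ c ∈ jumpingNumbers d S, ∃ q : ℚ, c = (q : ℝ)) ∧
    DiscreteTopology ↥(jumpingNumbers d S) := by
  obtain ⟨ℓ, hℓ, h⟩ := exists_common_denominator_jumpingNumbers (isUpperSet_of_forall_add_mem hS)
  refine ⟨⟨ℓ, hℓ, h⟩, fun c hc => ?_, discreteTopology_of_natCast_mul_eq_intCast hℓ h⟩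
  obtain ⟨z, hz⟩ := h c hc
  refine ⟨z / ℓ, ?_⟩
  push_cast
  rw [← hz]
  field_simp

/-- Monomial case of the candidate jumping number structure (Section 2.1.1): all jumping
numbers of a cofinite monomial ideal have a common denominator `ℓ`; in particular they are
rational and form a discrete subset of `ℝ`. -/
theorem jumping_numbers_common_denominator (d : ℕ) (hd : 1 ≤ d) (k : Type*) [Field k]
    (S : Set (Fin d → ℕ)) (hS : ∀ v ∈ S, ∀ w : Fin d → ℕ, v + w ∈ S)
    (hcof : (Sᶜ : Set (Fin d → ℕ)).Finite) :
    (∃ ℓ : ℕ, 0 < ℓ ∧ ∀ c : ℝ, 0 < c → 0 < multJump d S c → ∃ z : ℤ, (ℓ : ℝ) * c = z) ∧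
    (∀ c : ℝ, 0 < c → 0 < multJump d S c → ∃ q : ℚ, c = (q : ℝ)) ∧
    DiscreteTopology ↥{c : ℝ | 0 < c ∧ 0 < multJump d S c} := by
  obtain ⟨⟨ℓ, hℓ, h⟩, hrat, hdiscrete⟩ := jumping_numbers_common_denominator_general hS
  exact ⟨⟨ℓ, hℓ, fun c hc hm => h c (mem_jumpingNumbers_of_multJump_pos hc hm)⟩,
    fun c hc hm => hrat c (mem_jumpingNumbers_of_multJump_pos hc hm),
    hdiscrete.of_subset fun c hc => mem_jumpingNumbers_of_multJump_pos hc.1 hc.2⟩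
end
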